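/- arXiv:1703.01830 — 3 statements merged into one kernel-verified Lean document; each statement's English description precedes it below -/
import Mathlib

section
/- For every y ∈ 𝒜' with y ∉ E one has d(y, E) ≤ (1 + n√r / 2) · d(y, 𝒫); in the notation of the paper, κ(y) ≤ 1 + n√r / 2 for every y ∈ 𝒜' \ E. -/
open Finset

/-- A set function `g` on subsets of `V` is submodular. -/
def Submodular {V : Type*} [DecidableEq V] (g : Finset V → ℝ) : Prop :=
  ∀ X Y : Finset V, g X + g Y ≥ g (X ∪ Y) + g (X ∩ Y)

/-- `x` belongs to the base polytope `B(g)` of the set function `g`. -/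
def InBasePolytope {V : Type*} [Fintype V] (g : Finset V → ℝ) (x : V → ℝ) : Prop :=
  (∀ S : Finset V, ∑ v ∈ S, x v ≤ g S) ∧ (∑ v, x v = g Finset.univ)

/-- Euclidean norm of a finitely indexed real vector. -/
noncomputable def norm2 {ι : Type*} [Fintype ι] (x : ι → ℝ) : ℝ :=
  Real.sqrt (∑ i, x i ^ 2)

/-- Euclidean distance from a point to a set of vectors. -/
noncomputable def distSet {ι : Type*} [Fintype ι] (y : ι → ℝ) (K : Set (ι → ℝ)) : ℝ :=
  sInf ((fun z => norm2 (y - z)) '' K)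

/-!
Given `p ∈ 𝒫`, let `x` minimise `‖x - p‖² + N ‖s - A x‖²` over `𝒫`, with residual `d = s - A x` and
displacement `g = x - p`. Whenever `d(S) > 0`, some block has slack `xᵢ(S) < fᵢ(S)`, and uncrossing
tight sets yields an exchange `u ∈ S`, `v ∉ S` inside that block; optimality of `x` turns it into
`N (d u - d v) ≤ gᵢ u - gᵢ v`. Apply this to the superlevel sets of `d`: each gap between
consecutive values of `N d` in increasing order is spanned by such a pair, whence the squared gaps
add up to at most `2 ‖g‖²`. Since `∑ d = 0`, a discrete Poincaré inequality with constant `n² / 8`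
gives `N ‖d‖ ≤ (n / 2) ‖g‖`.

Combined with the optimality of `x` in the direction of `p`, this bounds `‖x - p‖` by
`(n / 2) ‖s - A p‖` independently of `N`, and `N → ∞` produces a point of `𝒫 ∩ A⁻¹ s` within
`(n / 2) ‖s - A p‖` of `p`. If `A y = s`, then `‖s - A p‖ = ‖A (y - p)‖ ≤ √r ‖y - p‖`, and the
triangle inequality through the point `p ∈ 𝒫` nearest to `y` finishes the proof.
-/

section Increments

variable (l : ℕ → ℝ)

lemma sq_sub_le_mul_sum_sq_increments {a b : ℕ} (hab : a ≤ b) :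
    (l b - l a) ^ 2 ≤ ((b : ℝ) - a) * ∑ k ∈ Ico a b, (l (k + 1) - l k) ^ 2 := by
  have h := sq_sum_le_card_mul_sum_sq (s := Ico a b) (f := fun k ↦ l (k + 1) - l k)
  rwa [sum_Ico_sub l hab, Nat.card_Ico, Nat.cast_sub hab] at h

lemma sum_range_succ_sub_natCast (n k : ℕ) :
    ∑ a ∈ range (k + 1), ((n : ℝ) - a) = (k + 1) * (2 * n - k) / 2 := by
  induction k with
  | zero => simp
  | succ k ih => rw [sum_range_succ, ih]; push_cast; ring

lemma sum_sq_sub_le_weighted_sum_sq_increments (n : ℕ) :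
    ∑ a ∈ range n, (l n - l a) ^ 2 ≤
      ∑ k ∈ range n, ((k : ℝ) + 1) * (2 * n - k) / 2 * (l (k + 1) - l k) ^ 2 := by
  calc ∑ a ∈ range n, (l n - l a) ^ 2
      ≤ ∑ a ∈ range n, ((n : ℝ) - a) * ∑ k ∈ Ico a n, (l (k + 1) - l k) ^ 2 :=
        sum_le_sum fun a ha ↦ sq_sub_le_mul_sum_sq_increments l (mem_range.1 ha).le
    _ = ∑ k ∈ range n, (∑ a ∈ range (k + 1), ((n : ℝ) - a)) * (l (k + 1) - l k) ^ 2 := by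
        simp only [mul_sum, sum_mul, range_eq_Ico]
        exact sum_Ico_Ico_comm 0 n fun a k ↦ ((n : ℝ) - a) * (l (k + 1) - l k) ^ 2
    _ = _ := by simp only [sum_range_succ_sub_natCast]

-- Passing from `n` to `n + 1` adds exactly `∑ a < n, (l n - l a) ^ 2` to the left-hand side.
lemma card_mul_sum_sq_sub_sq_sum_le_weighted (n : ℕ) :
    n * ∑ j ∈ range n, l j ^ 2 - (∑ j ∈ range n, l j) ^ 2 ≤
      ∑ k ∈ range n, (n : ℝ) * (k + 1) * (n - 1 - k) / 2 * (l (k + 1) - l k) ^ 2 := by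
  induction n with
  | zero => simp
  | succ n ih =>
    have hleft : ∑ a ∈ range n, (l n - l a) ^ 2 =
        n * l n ^ 2 - 2 * l n * ∑ a ∈ range n, l a + ∑ a ∈ range n, l a ^ 2 := by
      simp only [sub_sq, sum_add_distrib, sum_sub_distrib, mul_sum, sum_const, card_range,
        nsmul_eq_mul]
    have hright : ∑ k ∈ range n, ((n + 1 : ℕ) : ℝ) * (k + 1) * ((n + 1 : ℕ) - 1 - k) / 2 *
          (l (k + 1) - l k) ^ 2 =
        ∑ k ∈ range n, (n : ℝ) * (k + 1) * (n - 1 - k) / 2 * (l (k + 1) - l k) ^ 2 +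
          ∑ k ∈ range n, ((k : ℝ) + 1) * (2 * n - k) / 2 * (l (k + 1) - l k) ^ 2 := by
      rw [← sum_add_distrib]
      exact sum_congr rfl fun k _ ↦ by push_cast; ring
    have hlast := sum_sq_sub_le_weighted_sum_sq_increments l n
    rw [sum_range_succ, sum_range_succ, sum_range_succ, hright]
    push_cast
    linarith

lemma card_mul_sum_sq_sub_sq_sum_le (m : ℕ) :
    ((m : ℝ) + 1) * ∑ j ∈ range (m + 1), l j ^ 2 - (∑ j ∈ range (m + 1), l j) ^ 2 ≤
      ((m : ℝ) + 1) ^ 3 / 8 * ∑ k ∈ range m, (l (k + 1) - l k) ^ 2 := by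
  have h := card_mul_sum_sq_sub_sq_sum_le_weighted l (m + 1)
  rw [sum_range_succ (n := m) (f := fun k : ℕ ↦ _ * (_ : ℝ))] at h
  push_cast at h
  refine h.trans ?_
  rw [add_sub_cancel_right, sub_self, mul_zero, zero_div, zero_mul, add_zero, mul_sum]
  refine sum_le_sum fun k _ ↦ mul_le_mul_of_nonneg_right ?_ (sq_nonneg _)
  -- AM-GM: `(k + 1) * (m - k) ≤ (m + 1) ^ 2 / 4`
  nlinarith [mul_nonneg (by positivity : (0 : ℝ) ≤ m + 1) (sq_nonneg ((m : ℝ) - 1 - 2 * k))]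

variable {l}

lemma sum_sq_increments_le_sq_sub (hl : Monotone l) {a b : ℕ} (hab : a ≤ b) {K : Finset ℕ}
    (hK : K ⊆ Ico a b) : ∑ k ∈ K, (l (k + 1) - l k) ^ 2 ≤ (l b - l a) ^ 2 :=
  calc ∑ k ∈ K, (l (k + 1) - l k) ^ 2 ≤ ∑ k ∈ Ico a b, (l (k + 1) - l k) ^ 2 :=
        sum_le_sum_of_subset_of_nonneg hK fun _ _ _ ↦ sq_nonneg _
    _ ≤ (∑ k ∈ Ico a b, (l (k + 1) - l k)) ^ 2 :=
        sum_sq_le_sq_sum_of_nonneg fun k _ ↦ sub_nonneg.2 (hl k.le_succ)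
    _ = (l b - l a) ^ 2 := by rw [sum_Ico_sub l hab]

-- Greedily from the left: pair the least `v ∈ S` with the farthest `u` for which `(v, u)` satisfies
-- the inequality. Pairs crossing increments beyond `u` avoid both points, so `S` loses `u` and `v`.
lemma sum_sq_increments_le_of_crossing {g : ℕ → ℝ} (hl : Monotone l) (S K : Finset ℕ)
    (hK : ∀ k ∈ K, ∃ v ∈ S, ∃ u ∈ S, v ≤ k ∧ k < u ∧ l u - l v ≤ g u - g v) :
    ∑ k ∈ K, (l (k + 1) - l k) ^ 2 ≤ 2 * ∑ j ∈ S, g j ^ 2 := by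
  induction S using Finset.strongInduction generalizing K with
  | H S ih =>
  rcases K.eq_empty_or_nonempty with rfl | ⟨k₀, hk₀⟩
  · rw [sum_empty]; positivity
  obtain ⟨v₀, hv₀, -⟩ := hK k₀ hk₀
  obtain ⟨v, hv, hvmin⟩ := S.exists_min_image id ⟨v₀, hv₀⟩
  obtain ⟨u, hu, humax⟩ := {j ∈ S | l j - l v ≤ g j - g v}.exists_max_image id ⟨v, by simp [hv]⟩
  simp only [id, mem_filter] at hvmin hu humax
  have hvu : v ≤ u := hvmin u hu.1
  have hsub : {u, v} ⊆ S := by simp [insert_subset_iff, hu.1, hv]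
  have hbelow : ∑ k ∈ K with ¬ u ≤ k, (l (k + 1) - l k) ^ 2 ≤ (l u - l v) ^ 2 := by
    refine sum_sq_increments_le_sq_sub hl hvu fun k hk ↦ ?_
    obtain ⟨hkK, hku⟩ := mem_filter.1 hk
    obtain ⟨v', hv', -, -, hv'k, -⟩ := hK k hkK
    exact mem_Ico.2 ⟨(hvmin v' hv').trans hv'k, not_le.1 hku⟩
  have habove : ∑ k ∈ K with u ≤ k, (l (k + 1) - l k) ^ 2 ≤ 2 * ∑ j ∈ S \ {u, v}, g j ^ 2 := by
    refine ih _ (sdiff_ssubset hsub (by simp)) _ fun k hk ↦ ?_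
    obtain ⟨hkK, huk⟩ := mem_filter.1 hk
    obtain ⟨v', hv', u', hu', hv'k, hku', hle⟩ := hK k hkK
    have hu'_gt : g u' - g v < l u' - l v := by
      by_contra! h
      exact absurd (humax u' ⟨hu', h⟩) (by lia)
    have hv'_mem : v' ∉ ({u, v} : Finset ℕ) := by
      rw [mem_insert, mem_singleton]
      rintro (rfl | rfl) <;> linarith
    have hu'_mem : u' ∉ ({u, v} : Finset ℕ) := by
      rw [mem_insert, mem_singleton]
      lia
    exact ⟨v', mem_sdiff.2 ⟨hv', hv'_mem⟩, u', mem_sdiff.2 ⟨hu', hu'_mem⟩, hv'k, hku', hle⟩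
  have hpair : (l u - l v) ^ 2 ≤ 2 * ∑ j ∈ {u, v}, g j ^ 2 := by
    rcases hvu.eq_or_lt with rfl | hlt
    · simpa using sq_nonneg (g v)
    · rw [sum_pair hlt.ne']
      nlinarith [hl hvu, sq_nonneg (g u + g v)]
  rw [← sum_filter_add_sum_filter_not K (u ≤ ·)]
  have hsplit := sum_sdiff (f := fun j ↦ g j ^ 2) hsub
  linarith

lemma sum_sq_increments_le_of_forall_exists_crossing {ι : Type*} [Fintype ι] {g : ι → ℕ → ℝ}
    (hl : Monotone l) (m : ℕ)
    (hcross : ∀ k < m, l k < l (k + 1) →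
      ∃ i, ∃ v ≤ k, ∃ u ≤ m, k < u ∧ l u - l v ≤ g i u - g i v) :
    ∑ k ∈ range m, (l (k + 1) - l k) ^ 2 ≤ 2 * ∑ i, ∑ j ∈ range (m + 1), g i j ^ 2 := by
  classical
  let crosses (i : ι) (k : ℕ) : Prop := ∃ v ≤ k, ∃ u ≤ m, k < u ∧ l u - l v ≤ g i u - g i v
  have hcrosses (i : ι) :
      ∑ k ∈ range m with crosses i k, (l (k + 1) - l k) ^ 2 ≤
        2 * ∑ j ∈ range (m + 1), g i j ^ 2 := by
    refine sum_sq_increments_le_of_crossing hl _ _ fun k hk ↦ ?_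
    obtain ⟨hkm, v, hvk, u, hum, hku, hle⟩ := mem_filter.1 hk
    rw [mem_range] at hkm
    exact ⟨v, mem_range.2 (by lia), u, mem_range.2 (by lia), hvk, hku, hle⟩
  have hcover : ∑ k ∈ range m, (l (k + 1) - l k) ^ 2 ≤
      ∑ i, ∑ k ∈ range m with crosses i k, (l (k + 1) - l k) ^ 2 := by
    simp only [sum_filter]
    rw [sum_comm]
    refine sum_le_sum fun k hk ↦ ?_
    rcases (hl k.le_succ).eq_or_lt with heq | hlt
    · simp [heq]
    · obtain ⟨i, hi⟩ := hcross k (mem_range.1 hk) hlt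
      exact (if_pos hi).ge.trans <| single_le_sum
        (f := fun i ↦ if crosses i k then (l (k + 1) - l k) ^ 2 else 0)
        (fun _ _ ↦ ite_nonneg (sq_nonneg _) le_rfl) (mem_univ i)
  exact hcover.trans <| (sum_le_sum fun i _ ↦ hcrosses i).trans_eq (mul_sum _ _ _).symm

lemma sum_sq_le_of_forall_exists_crossing {ι : Type*} [Fintype ι] {g : ι → ℕ → ℝ}
    (hl : Monotone l) (m : ℕ) (hsum : ∑ j ∈ range (m + 1), l j = 0)
    (hcross : ∀ k < m, l k < l (k + 1) →
      ∃ i, ∃ v ≤ k, ∃ u ≤ m, k < u ∧ l u - l v ≤ g i u - g i v) :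
    ∑ j ∈ range (m + 1), l j ^ 2 ≤
      ((m : ℝ) + 1) ^ 2 / 4 * ∑ i, ∑ j ∈ range (m + 1), g i j ^ 2 := by
  have hpoincare := card_mul_sum_sq_sub_sq_sum_le l m
  rw [hsum, zero_pow two_ne_zero, sub_zero] at hpoincare
  refine le_of_mul_le_mul_left ?_ (by positivity : (0 : ℝ) < m + 1)
  calc ((m : ℝ) + 1) * ∑ j ∈ range (m + 1), l j ^ 2
      ≤ ((m : ℝ) + 1) ^ 3 / 8 * ∑ k ∈ range m, (l (k + 1) - l k) ^ 2 := hpoincare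
    _ ≤ ((m : ℝ) + 1) ^ 3 / 8 * (2 * ∑ i, ∑ j ∈ range (m + 1), g i j ^ 2) := by
        gcongr
        exact sum_sq_increments_le_of_forall_exists_crossing hl m hcross
    _ = ((m : ℝ) + 1) *
          (((m : ℝ) + 1) ^ 2 / 4 * ∑ i, ∑ j ∈ range (m + 1), g i j ^ 2) := by ring

end Increments

section Reordering

variable {V : Type*} [Fintype V]

lemma exists_monotone_enumeration [Nonempty V] (l : V → ℝ) :
    ∃ a : ℕ → V, Monotone (l ∘ a) ∧
      Set.BijOn a (range (Fintype.card V) : Finset ℕ) (univ : Finset V) := by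
  obtain ⟨m, hm⟩ := Nat.exists_eq_add_one.2 (Fintype.card_pos (α := V))
  let e₀ : Fin (m + 1) ≃ V := (Fintype.equivFinOfCardEq hm).symm
  let e : Fin (m + 1) ≃ V := (Tuple.sort (l ∘ e₀)).trans e₀
  have hclamp {j : ℕ} (hj : j < m + 1) : Fin.clamp j m = ⟨j, hj⟩ :=
    Fin.ext (by simpa using Nat.lt_succ_iff.1 hj)
  refine ⟨fun j ↦ e (Fin.clamp j m), fun j k hjk ↦
    Tuple.monotone_sort (l ∘ e₀) (Fin.clamp_monotone hjk), by simp, ?_, ?_⟩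
  · intro j hj k hk hjk
    simp only [hm, coe_range, Set.mem_Iio] at hj hk
    simpa [hclamp hj, hclamp hk] using hjk
  · intro v _
    exact ⟨e.symm v, by simp [hm, Nat.lt_succ_iff.1 (e.symm v).2], by simp [hclamp (e.symm v).2]⟩

lemma sum_superlevel_pos {l : V → ℝ} (hsum : ∑ v, l v = 0) {a b : V} {t : ℝ} (ha : l a < t)
    (hb : t ≤ l b) : 0 < ∑ v with t ≤ l v, l v := by
  rcases lt_or_ge 0 t with ht | ht
  · exact sum_pos (fun v hv ↦ ht.trans_le (mem_filter.1 hv).2) ⟨b, by simpa⟩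
  · have hneg : ∑ v with ¬ t ≤ l v, l v < 0 :=
      sum_neg (fun v hv ↦ (not_le.1 (mem_filter.1 hv).2).trans_le ht) ⟨a, by simpa⟩
    linarith [sum_filter_add_sum_filter_not univ (t ≤ l ·) l]

lemma sum_sq_le_of_forall_exists_exchange {ι : Type*} [Fintype ι] {l : V → ℝ} {g : ι → V → ℝ}
    (hsum : ∑ v, l v = 0)
    (hexch : ∀ S : Finset V, 0 < ∑ v ∈ S, l v →
      ∃ i, ∃ u ∈ S, ∃ v ∉ S, l u - l v ≤ g i u - g i v) :
    ∑ v, l v ^ 2 ≤ (Fintype.card V : ℝ) ^ 2 / 4 * ∑ i, ∑ v, g i v ^ 2 := by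
  rcases isEmpty_or_nonempty V with _ | _
  · simp
  obtain ⟨m, hm⟩ := Nat.exists_eq_add_one.2 (Fintype.card_pos (α := V))
  obtain ⟨a, hmono, ha⟩ := exists_monotone_enumeration l
  rw [hm] at ha
  have hreindex (φ : V → ℝ) : ∑ v, φ v = ∑ j ∈ range (m + 1), φ (a j) :=
    (sum_nbij a ha.mapsTo ha.injOn ha.surjOn fun _ _ ↦ rfl).symm
  simp only [hm, Nat.cast_add_one, hreindex] at hsum ⊢
  refine sum_sq_le_of_forall_exists_crossing hmono m hsum fun k _ hlt ↦ ?_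
  obtain ⟨i, u, hu, v, hv, hle⟩ :=
    hexch _ (sum_superlevel_pos (by rwa [hreindex]) hlt le_rfl)
  obtain ⟨p, hp, rfl⟩ := ha.surjOn (mem_univ u)
  obtain ⟨q, -, rfl⟩ := ha.surjOn (mem_univ v)
  rw [mem_coe, mem_range] at hp
  refine ⟨i, q, ?_, p, by lia, ?_, hle⟩
  · by_contra! hkq
    exact hv (mem_filter.2 ⟨mem_univ _, hmono hkq⟩)
  · by_contra! hpk
    exact ((hmono hpk).trans_lt hlt).not_ge (mem_filter.1 hu).2

end Reordering

section Penalty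

variable {E F : Type*} [NormedAddCommGroup E] [InnerProductSpace ℝ E]
  [NormedAddCommGroup F] [InnerProductSpace ℝ F] {K : Set E}

lemma exists_forall_mul_inner_le_inner (hK : IsCompact K) (hconv : Convex ℝ K) (hne : K.Nonempty)
    (A : E →L[ℝ] F) (p : E) (s : F) (N : ℝ) :
    ∃ x ∈ K, ∀ z ∈ K, N * inner ℝ (s - A x) (A (z - x)) ≤ inner ℝ (x - p) (z - x) := by
  obtain ⟨x, hx, hmin⟩ := hK.exists_isMinOn (f := fun x ↦ ‖x - p‖ ^ 2 + N * ‖s - A x‖ ^ 2) hne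
    (by fun_prop)
  refine ⟨x, hx, fun z hz ↦ ?_⟩
  have hderiv := (((hasFDerivAt_id x).sub_const p).norm_sq.add
    ((A.hasFDerivAt (x := x)).const_sub s |>.norm_sq.const_mul N)).hasFDerivWithinAt (s := K)
  have hnonneg := hmin.localize.hasFDerivWithinAt_nonneg hderiv
    (sub_mem_posTangentConeAt_of_segment_subset (hconv.segment_subset hx hz))
  have hexpand : 0 ≤ 2 * inner ℝ (x - p) (z - x) + N * (2 * -inner ℝ (s - A x) (A (z - x))) := by
    simpa [-map_sub] using! hnonneg
  linarith

lemma norm_sub_le_of_mul_inner_le_inner {A : E →L[ℝ] F} {x p : E} {s : F} {C N : ℝ} (hN : 0 ≤ N)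
    (hC : 0 ≤ C) (hvar : N * inner ℝ (s - A x) (A (p - x)) ≤ inner ℝ (x - p) (p - x))
    (hres : N * ‖s - A x‖ ≤ C * ‖x - p‖) : ‖x - p‖ ≤ C * ‖s - A p‖ := by
  have hsplit : A (p - x) = (s - A x) - (s - A p) := by rw [map_sub, sub_sub_sub_cancel_left]
  rw [hsplit, inner_sub_right, real_inner_self_eq_norm_sq, ← neg_sub x p, inner_neg_right,
    real_inner_self_eq_norm_mul_norm] at hvar
  have hsq : ‖x - p‖ * ‖x - p‖ ≤ C * ‖s - A p‖ * ‖x - p‖ :=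
    calc ‖x - p‖ * ‖x - p‖ ≤ N * inner ℝ (s - A x) (s - A p) - N * ‖s - A x‖ ^ 2 := by linarith
      _ ≤ N * (‖s - A x‖ * ‖s - A p‖) - 0 := by
          gcongr
          · exact real_inner_le_norm _ _
          · positivity
      _ = N * ‖s - A x‖ * ‖s - A p‖ := by ring
      _ ≤ C * ‖x - p‖ * ‖s - A p‖ := by gcongr
      _ = C * ‖s - A p‖ * ‖x - p‖ := by ring
  rcases (norm_nonneg (x - p)).eq_or_lt with hzero | hpos
  · rw [← hzero]; positivity
  · exact le_of_mul_le_mul_right hsq hpos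

theorem exists_map_eq_and_norm_sub_le (hK : IsCompact K) (hconv : Convex ℝ K) {A : E →L[ℝ] F}
    {p : E} (hp : p ∈ K) {s : F} {C : ℝ} (hC : 0 ≤ C)
    (hbound : ∀ x ∈ K, ∀ N > 0,
      (∀ z ∈ K, N * inner ℝ (s - A x) (A (z - x)) ≤ inner ℝ (x - p) (z - x)) →
        N * ‖s - A x‖ ≤ C * ‖x - p‖) :
    ∃ x ∈ K, A x = s ∧ ‖x - p‖ ≤ C * ‖s - A p‖ := by
  have happrox (N : ℝ) (hN : 0 < N) :
      ∃ x ∈ K, ‖x - p‖ ≤ C * ‖s - A p‖ ∧ N * ‖s - A x‖ ≤ C * (C * ‖s - A p‖) := by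
    obtain ⟨x, hx, hvar⟩ := exists_forall_mul_inner_le_inner hK hconv ⟨p, hp⟩ A p s N
    have hres := hbound x hx N hN hvar
    have hdist := norm_sub_le_of_mul_inner_le_inner hN.le hC (hvar p hp) hres
    exact ⟨x, hx, hdist, hres.trans (by gcongr)⟩
  have hcompact : IsCompact (K ∩ Metric.closedBall p (C * ‖s - A p‖)) :=
    hK.inter_right Metric.isClosed_closedBall
  have hmem : s ∈ A '' (K ∩ Metric.closedBall p (C * ‖s - A p‖)) := by
    rw [← (hcompact.image A.continuous).isClosed.closure_eq, Metric.mem_closure_iff]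
    intro ε hε
    obtain ⟨x, hx, hdist, hres⟩ := happrox ((C * (C * ‖s - A p‖) + 1) / ε) (by positivity)
    refine ⟨A x, ⟨x, ⟨hx, mem_closedBall_iff_norm.2 hdist⟩, rfl⟩, ?_⟩
    rw [dist_eq_norm]
    rw [div_mul_eq_mul_div, div_le_iff₀ hε] at hres
    have : 0 ≤ C * (C * ‖s - A p‖) := by positivity
    nlinarith
  obtain ⟨x, ⟨hx, hball⟩, hAx⟩ := hmem
  exact ⟨x, hx, hAx, mem_closedBall_iff_norm.1 hball⟩

end Penalty

lemma infDist_le_mul_infDist {X : Type*} [PseudoMetricSpace X] {S T : Set X} {y : X} {c : ℝ}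
    (hc : 0 ≤ c) (hT : T.Nonempty) (h : ∀ p ∈ T, ∃ x ∈ S, dist y x ≤ c * dist y p) :
    Metric.infDist y S ≤ c * Metric.infDist y T := by
  have := hT.to_subtype
  rw [Metric.infDist_eq_iInf (s := T), Real.mul_iInf_of_nonneg hc]
  refine le_ciInf fun ⟨p, hp⟩ ↦ ?_
  obtain ⟨x, hx, hle⟩ := h p hp
  exact (Metric.infDist_le_dist_of_mem hx).trans hle

section Submodular

variable {V : Type*} [DecidableEq V] {g : Finset V → ℝ} {x : V → ℝ}

lemma Submodular.exists_sum_le_and_sum_eq (hg : Submodular g) (h0 : g ∅ = 0) (T : Finset V) :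
    ∃ x : V → ℝ, (∀ S ⊆ T, ∑ v ∈ S, x v ≤ g S) ∧ ∑ v ∈ T, x v = g T := by
  induction T using Finset.induction_on with
  | empty => exact ⟨0, by simp [h0], by simp [h0]⟩
  | insert a T ha ih =>
    obtain ⟨x, hle, heq⟩ := ih
    have hsum {S : Finset V} (hS : a ∉ S) :
        ∑ v ∈ S, Function.update x a (g (insert a T) - g T) v = ∑ v ∈ S, x v :=
      sum_update_of_notMem hS _ _
    refine ⟨Function.update x a (g (insert a T) - g T), fun S hS ↦ ?_, ?_⟩
    · by_cases haS : a ∈ S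
      · have hmarginal := hg S T
        have hunion : S ∪ T = insert a T := by grind
        have hinter : S ∩ T = S.erase a := by grind
        have herase := hle (S.erase a) (by grind)
        rw [← add_sum_erase S _ haS, Function.update_self, hsum (notMem_erase a S)]
        rw [hunion, hinter] at hmarginal
        linarith
      · rw [hsum haS]
        exact hle S ((subset_insert_iff_of_notMem haS).1 hS)
    · rw [sum_insert ha, Function.update_self, hsum ha, heq, sub_add_cancel]

lemma sum_add_smul_single_sub_single (T : Finset V) (x : V → ℝ) (ε : ℝ) (u v : V) :
    ∑ w ∈ T, (x + ε • (Pi.single u 1 - Pi.single v 1) : V → ℝ) w =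
      ∑ w ∈ T, x w + ε * ((if u ∈ T then 1 else 0) - if v ∈ T then 1 else 0) := by
  simp [sum_add_distrib, ← mul_sum, sum_sub_distrib, Pi.single_apply]

variable [Fintype V]

lemma Submodular.exists_inBasePolytope (hg : Submodular g) (h0 : g ∅ = 0) :
    ∃ x, InBasePolytope g x := by
  obtain ⟨x, hle, heq⟩ := hg.exists_sum_le_and_sum_eq h0 univ
  exact ⟨x, fun S ↦ hle S (subset_univ S), heq⟩

lemma Submodular.sum_union_eq_and_sum_inter_eq (hg : Submodular g) (hx : InBasePolytope g x)
    {S T : Finset V} (hS : ∑ v ∈ S, x v = g S) (hT : ∑ v ∈ T, x v = g T) :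
    ∑ v ∈ S ∪ T, x v = g (S ∪ T) ∧ ∑ v ∈ S ∩ T, x v = g (S ∩ T) := by
  have hunion := hx.1 (S ∪ T)
  have hinter := hx.1 (S ∩ T)
  have hsum := sum_union_inter (s₁ := S) (s₂ := T) (f := x)
  have hsub := hg S T
  constructor <;> linarith

lemma Submodular.exists_forall_sum_lt (hg : Submodular g) (hx : InBasePolytope g x)
    {S : Finset V} (hS : S.Nonempty) (hlt : ∑ v ∈ S, x v < g S) :
    ∃ u ∈ S, ∃ v ∉ S, ∀ T : Finset V, u ∈ T → v ∉ T → ∑ w ∈ T, x w < g T := by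
  -- Otherwise `S = ⋃ u ∈ S, ⋂ v ∉ S, T u v` is tight, as tight sets form a lattice.
  by_contra! hcon
  choose! T hu hv hge using hcon
  let tight (R : Finset V) : Prop := ∑ w ∈ R, x w = g R
  have htight (u) (huS : u ∈ S) : tight (Sᶜ.inf (T u)) :=
    inf_induction hx.2 (fun _ h₁ _ h₂ ↦ (hg.sum_union_eq_and_sum_inter_eq hx h₁ h₂).2)
      fun v hvS ↦ (hx.1 _).antisymm (hge u huS v (mem_compl.1 hvS))
  have hS_eq : S.sup' hS (fun u ↦ Sᶜ.inf (T u)) = S := by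
    refine (sup'_le hS _ fun u huS w hw ↦ ?_).antisymm fun u huS ↦ ?_
    · by_contra hwS
      exact hv u huS w hwS (inf_le (f := T u) (mem_compl.2 hwS) hw)
    · exact le_sup' (fun u ↦ Sᶜ.inf (T u)) huS <| singleton_subset_iff.1 <|
        Finset.le_inf fun v hvS ↦ singleton_subset_iff.2 (hu u huS v (mem_compl.1 hvS))
  have hS_tight : tight (S.sup' hS fun u ↦ Sᶜ.inf (T u)) :=
    sup'_induction hS _ (fun _ h₁ _ h₂ ↦ (hg.sum_union_eq_and_sum_inter_eq hx h₁ h₂).1) htight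
  exact hlt.ne (hS_eq ▸ hS_tight)

lemma exists_exchange_inBasePolytope (hx : InBasePolytope g x) {u v : V}
    (hlt : ∀ T : Finset V, u ∈ T → v ∉ T → ∑ w ∈ T, x w < g T) :
    ∃ ε : ℝ, 0 < ε ∧ InBasePolytope g (x + ε • (Pi.single u 1 - Pi.single v 1)) := by
  have hslack (T : Finset V) : ∀ᶠ ε : ℝ in nhdsWithin 0 (Set.Ioi 0),
      ∑ w ∈ T, (x + ε • (Pi.single u 1 - Pi.single v 1) : V → ℝ) w ≤ g T := by
    simp only [sum_add_smul_single_sub_single]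
    have hxT := hx.1 T
    by_cases huv : u ∈ T ∧ v ∉ T
    · filter_upwards [Ioc_mem_nhdsGT (sub_pos.2 (hlt T huv.1 huv.2))] with ε hε
      simp only [huv, if_true, if_false]
      linarith [hε.2]
    · filter_upwards [self_mem_nhdsWithin] with ε (hε : 0 < ε)
      have : ((if u ∈ T then 1 else 0) - if v ∈ T then 1 else 0 : ℝ) ≤ 0 := by
        grind
      nlinarith
  obtain ⟨ε, hle, hε⟩ := ((Filter.eventually_all.2 hslack).and self_mem_nhdsWithin).exists
  exact ⟨ε, hε, hle, by simp [sum_add_smul_single_sub_single, -Pi.add_apply, hx.2]⟩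

end Submodular

section BasePolytope

variable {V : Type*} [Fintype V] (g : Finset V → ℝ)

lemma convex_setOf_inBasePolytope : Convex ℝ {x | InBasePolytope g x} := by
  intro x hx z hz a b ha hb hab
  have hsum (S : Finset V) :
      ∑ v ∈ S, (a • x + b • z) v = a * ∑ v ∈ S, x v + b * ∑ v ∈ S, z v := by
    simp [sum_add_distrib, mul_sum]
  refine ⟨fun S ↦ ?_, ?_⟩
  · calc ∑ v ∈ S, (a • x + b • z) v = a * ∑ v ∈ S, x v + b * ∑ v ∈ S, z v := hsum S
      _ ≤ a * g S + b * g S := by gcongr; exacts [hx.1 S, hz.1 S]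
      _ = g S := by rw [← add_mul, hab, one_mul]
  · rw [hsum, hx.2, hz.2, ← add_mul, hab, one_mul]

lemma isCompact_setOf_inBasePolytope : IsCompact {x | InBasePolytope g x} := by
  classical
  refine (isCompact_Icc (a := fun v ↦ g univ - g (univ.erase v))
    (b := fun v ↦ g {v})).of_isClosed_subset ?_ fun x hx ↦ ⟨fun v ↦ ?_, fun v ↦ ?_⟩
  · simp only [InBasePolytope, Set.ofPred_and, Set.ofPred_forall]
    exact (isClosed_iInter fun S ↦ isClosed_le (by fun_prop) continuous_const).inter
      (isClosed_eq (by fun_prop) continuous_const)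
  · have herase := hx.1 (univ.erase v)
    rw [sub_le_iff_le_add, ← hx.2, ← add_sum_erase univ x (mem_univ v)]
    gcongr
  · simpa using hx.1 {v}

end BasePolytope

section BlockSum

variable {ι V : Type*}

/-- The product `𝒫 = ∏ᵢ B(fᵢ)` of base polytopes, with the `i`-th block of `y` occupying the
coordinates `(i, v)`. -/
def basePolytopeProd [Fintype V] (f : ι → Finset V → ℝ) : Set (EuclideanSpace ℝ (ι × V)) :=
  {y | ∀ i, InBasePolytope (f i) fun v ↦ y (i, v)}

/-- The map `A` of the paper, adding up the blocks `y = (y₁, …, yᵣ) ↦ y₁ + ⋯ + yᵣ`. -/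
noncomputable def blockSum [Fintype ι] :
    EuclideanSpace ℝ (ι × V) →L[ℝ] EuclideanSpace ℝ V :=
  (PiLp.continuousLinearEquiv 2 ℝ fun _ : V ↦ ℝ).symm ∘L
    ContinuousLinearMap.pi fun v ↦ ∑ i, EuclideanSpace.proj (i, v)

@[simp]
lemma blockSum_apply [Fintype ι] (y : EuclideanSpace ℝ (ι × V)) (v : V) :
    blockSum y v = ∑ i, y (i, v) := by
  simp [blockSum]

lemma blockSum_single [Fintype ι] [DecidableEq ι] [DecidableEq V] (i : ι) (v : V) (c : ℝ) :
    blockSum (EuclideanSpace.single (i, v) c) = EuclideanSpace.single v c := by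
  ext w
  by_cases hw : w = v <;> simp [hw]

lemma norm_blockSum_le [Fintype ι] [Fintype V] (y : EuclideanSpace ℝ (ι × V)) :
    ‖blockSum y‖ ≤ √(Fintype.card ι) * ‖y‖ := by
  rw [EuclideanSpace.norm_eq, EuclideanSpace.norm_eq, ← Real.sqrt_mul (Nat.cast_nonneg _)]
  refine Real.sqrt_le_sqrt ?_
  simp only [Real.norm_eq_abs, sq_abs, blockSum_apply, Fintype.sum_prod_type_right, mul_sum]
  exact sum_le_sum fun v _ ↦ by
    simpa [mul_sum] using sq_sum_le_card_mul_sum_sq (s := univ) (f := fun i ↦ y (i, v))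

section Topology

variable [Fintype V] (f : ι → Finset V → ℝ)

lemma convex_basePolytopeProd : Convex ℝ (basePolytopeProd f) :=
  fun _ hx _ hz _ _ ha hb hab i ↦ convex_setOf_inBasePolytope (f i) (hx i) (hz i) ha hb hab

lemma isCompact_basePolytopeProd : IsCompact (basePolytopeProd f) := by
  have himage := (isCompact_univ_pi fun i ↦ isCompact_setOf_inBasePolytope (f i)).image
    (f := fun x ↦ WithLp.toLp 2 fun j : ι × V ↦ x j.1 j.2) (by fun_prop)
  convert himage
  ext y
  exact ⟨fun hy ↦ ⟨fun i v ↦ y (i, v), fun i _ ↦ hy i, rfl⟩, fun ⟨_, hx, hxy⟩ i ↦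
    hxy ▸ hx i trivial⟩

end Topology

variable [Fintype V] {f : ι → Finset V → ℝ}

lemma basePolytopeProd_nonempty [DecidableEq V] (hsub : ∀ i, Submodular (f i))
    (h0 : ∀ i, f i ∅ = 0) : (basePolytopeProd f).Nonempty := by
  choose x hx using fun i ↦ (hsub i).exists_inBasePolytope (h0 i)
  exact ⟨WithLp.toLp 2 fun j ↦ x j.1 j.2, hx⟩

variable [Fintype ι] {s : EuclideanSpace ℝ V} {x p : EuclideanSpace ℝ (ι × V)}

lemma sum_sub_blockSum_eq_zero (hs : InBasePolytope (fun S ↦ ∑ i, f i S) s)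
    (hx : x ∈ basePolytopeProd f) : ∑ v, (s - blockSum x) v = 0 := by
  simp only [PiLp.sub_apply, sum_sub_distrib, blockSum_apply, hs.2]
  rw [sum_comm, sub_eq_zero]
  exact sum_congr rfl fun i _ ↦ (hx i).2.symm

lemma exists_sum_lt_of_sum_sub_blockSum_pos (hs : InBasePolytope (fun S ↦ ∑ i, f i S) s)
    {S : Finset V} (hS : 0 < ∑ v ∈ S, (s - blockSum x) v) : ∃ i, ∑ v ∈ S, x (i, v) < f i S := by
  by_contra! hcon
  have hle : ∑ i, f i S ≤ ∑ v ∈ S, ∑ i, x (i, v) := by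
    rw [sum_comm]
    exact sum_le_sum fun i _ ↦ hcon i
  simp only [PiLp.sub_apply, sum_sub_distrib, blockSum_apply] at hS
  linarith [hs.1 S]

variable [DecidableEq V]

lemma exists_sub_le_sub_of_forall_inner_le {d : EuclideanSpace ℝ V} {i : ι} {S : Finset V}
    (hsub : Submodular (f i)) (hx : x ∈ basePolytopeProd f)
    (hvar : ∀ z ∈ basePolytopeProd f, inner ℝ d (blockSum (z - x)) ≤ inner ℝ (x - p) (z - x))
    (hS : S.Nonempty) (hlt : ∑ v ∈ S, x (i, v) < f i S) :
    ∃ u ∈ S, ∃ v ∉ S, d u - d v ≤ (x - p) (i, u) - (x - p) (i, v) := by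
  classical
  obtain ⟨u, hu, v, hv, hslack⟩ := hsub.exists_forall_sum_lt (hx i) hS hlt
  obtain ⟨ε, hε, hmem⟩ := exists_exchange_inBasePolytope (hx i) hslack
  refine ⟨u, hu, v, hv, le_of_mul_le_mul_left ?_ hε⟩
  let δ : EuclideanSpace ℝ (ι × V) :=
    EuclideanSpace.single (i, u) 1 - EuclideanSpace.single (i, v) 1
  have hz : x + ε • δ ∈ basePolytopeProd f := by
    intro j
    rcases eq_or_ne j i with rfl | hj
    · convert hmem using 2 with w
      simp [δ, Pi.single_apply]
    · simpa [δ, hj] using hx j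
  simpa [δ, blockSum_single, inner_sub_right, inner_smul_right,
    EuclideanSpace.inner_single_right] using hvar _ hz

lemma mul_norm_sub_blockSum_le (hsub : ∀ i, Submodular (f i))
    (hs : InBasePolytope (fun S ↦ ∑ i, f i S) s) (hx : x ∈ basePolytopeProd f)
    {N : ℝ} (hN : 0 < N)
    (hvar : ∀ z ∈ basePolytopeProd f,
      N * inner ℝ (s - blockSum x) (blockSum (z - x)) ≤ inner ℝ (x - p) (z - x)) :
    N * ‖s - blockSum x‖ ≤ Fintype.card V / 2 * ‖x - p‖ := by
  let d := N • (s - blockSum x)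
  have hd (S : Finset V) : ∑ v ∈ S, d v = N * ∑ v ∈ S, (s - blockSum x) v := by
    simp only [d, PiLp.smul_apply, smul_eq_mul, mul_sum]
  have hsq : ∑ v, d v ^ 2 ≤
      (Fintype.card V : ℝ) ^ 2 / 4 * ∑ i, ∑ v, (x - p) (i, v) ^ 2 := by
    refine sum_sq_le_of_forall_exists_exchange
      (by rw [hd, sum_sub_blockSum_eq_zero hs hx, mul_zero]) fun S hS ↦ ?_
    have hSne : S.Nonempty := nonempty_of_sum_ne_zero hS.ne'
    rw [hd, mul_pos_iff_of_pos_left hN] at hS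
    obtain ⟨i, hi⟩ := exists_sum_lt_of_sum_sub_blockSum_pos hs hS
    refine ⟨i, exists_sub_le_sub_of_forall_inner_le (hsub i) hx (fun z hz ↦ ?_) hSne hi⟩
    rw [real_inner_smul_left]
    exact hvar z hz
  have hnorm : N * ‖s - blockSum x‖ = ‖d‖ := by rw [norm_smul, Real.norm_of_nonneg hN.le]
  rw [hnorm]
  refine le_of_sq_le_sq ?_ (by positivity)
  rw [mul_pow, div_pow, EuclideanSpace.real_norm_sq_eq, EuclideanSpace.real_norm_sq_eq,
    Fintype.sum_prod_type]
  exact hsq.trans_eq (by norm_num)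

theorem exists_blockSum_eq_and_norm_sub_le (hsub : ∀ i, Submodular (f i))
    (hs : InBasePolytope (fun S ↦ ∑ i, f i S) s) (hp : p ∈ basePolytopeProd f) :
    ∃ x ∈ basePolytopeProd f, blockSum x = s ∧
      ‖x - p‖ ≤ Fintype.card V / 2 * ‖s - blockSum p‖ :=
  exists_map_eq_and_norm_sub_le (isCompact_basePolytopeProd f) (convex_basePolytopeProd f) hp
    (by positivity) fun _ hx _ hN hvar ↦ mul_norm_sub_blockSum_le hsub hs hx hN hvar

theorem kappa_bound_on_A'_general (hsub : ∀ i, Submodular (f i)) (h0 : ∀ i, f i ∅ = 0)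
    (hs : InBasePolytope (fun S ↦ ∑ i, f i S) s) {y : EuclideanSpace ℝ (ι × V)}
    (hy : blockSum y = s) :
    Metric.infDist y {x ∈ basePolytopeProd f | blockSum x = s} ≤
      (1 + Fintype.card V * √(Fintype.card ι) / 2) * Metric.infDist y (basePolytopeProd f) := by
  refine infDist_le_mul_infDist (by positivity) (basePolytopeProd_nonempty hsub h0) fun p hp ↦ ?_
  obtain ⟨x, hx, hxs, hxp⟩ := exists_blockSum_eq_and_norm_sub_le hsub hs hp
  refine ⟨x, ⟨hx, hxs⟩, ?_⟩
  rw [← hy, ← map_sub] at hxp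
  calc dist y x ≤ dist y p + ‖x - p‖ := by
        rw [← dist_eq_norm, dist_comm x p]
        exact dist_triangle y p x
    _ ≤ dist y p + Fintype.card V / 2 * (√(Fintype.card ι) * dist y p) := by
        rw [dist_eq_norm y p]
        grw [hxp, norm_blockSum_le]
    _ = (1 + Fintype.card V * √(Fintype.card ι) / 2) * dist y p := by ring

end BlockSum

lemma norm2_eq_norm_toLp {ι : Type*} [Fintype ι] (x : ι → ℝ) : norm2 x = ‖WithLp.toLp 2 x‖ := by
  simp [norm2, EuclideanSpace.norm_eq]

lemma distSet_eq_infDist {ι : Type*} [Fintype ι] (y : ι → ℝ) (K : Set (ι → ℝ)) :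
    distSet y K =
      Metric.infDist (WithLp.toLp 2 y) {z : EuclideanSpace ℝ ι | WithLp.ofLp z ∈ K} := by
  rw [distSet, sInf_image', Metric.infDist_eq_iInf]
  let e : K ≃ {z : EuclideanSpace ℝ ι | WithLp.ofLp z ∈ K} :=
    (WithLp.equiv 2 (ι → ℝ)).symm.subtypeEquiv fun _ ↦ Iff.rfl
  exact e.iInf_congr fun z ↦ by rw [norm2_eq_norm_toLp, dist_eq_norm]; rfl

/-- for every `y ∈ 𝒜' \ E` one has `d(y, E) ≤ (1 + n√r/2) · d(y, 𝒫)`,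
i.e. `κ(y) ≤ 1 + n√r/2`. -/
theorem kappa_bound_on_A'
    {V : Type*} [Fintype V] [DecidableEq V] (r : ℕ)
    (f : Fin r → Finset V → ℝ)
    (hsub : ∀ i, Submodular (f i)) (h0 : ∀ i, f i ∅ = 0)
    (sstar : V → ℝ)
    (hsB : InBasePolytope (fun S => ∑ i, f i S) sstar)
    (hsMin : ∀ z : V → ℝ, InBasePolytope (fun S => ∑ i, f i S) z →
      ∑ v, sstar v ^ 2 ≤ ∑ v, z v ^ 2)
    (P A' E : Set (Fin r × V → ℝ))
    (hP : P = {y | ∀ i, InBasePolytope (f i) (fun v => y (i, v))})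
    (hA' : A' = {a | ∀ v, ∑ i, a (i, v) = sstar v})
    (hE : E = {y ∈ P | ∀ v, ∑ i, y (i, v) = sstar v})
    (y : Fin r × V → ℝ) (hyA : y ∈ A') (hyE : y ∉ E) :
    distSet y E ≤ (1 + (Fintype.card V : ℝ) * Real.sqrt r / 2) * distSet y P := by
  subst hP hA' hE
  have hfibre (z : EuclideanSpace ℝ (Fin r × V)) :
      blockSum z = WithLp.toLp 2 sstar ↔ ∀ v, ∑ i, z (i, v) = sstar v := by
    simp [PiLp.ext_iff]
  have h := kappa_bound_on_A'_general hsub h0 hsB ((hfibre (WithLp.toLp 2 y)).2 hyA)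
  simp only [hfibre, Fintype.card_fin] at h
  simpa only [distSet_eq_infDist] using! h
end

section
/- For every y ∈ 𝒫, letting y* be a point of E closest to y in Euclidean norm, one has ‖A(y − y*)‖₂² ≥ (4 / n²) · ‖y − y*‖₂². In other words, the objective (1/2)‖Ay‖₂² of (Prox-DSFM) is restricted ℓ-strongly convex with ℓ = 4/n², so ℓ* ≥ 4/n². -/
open Finset

/-!
Write `d = y - y*`, with blocks `d_i`. Say that mass can be transferred from `u` to `v` if some
feasible direction at `y*` has image `e_v - e_u` under `A` and positive inner product with `d`.
Such transfers compose, and none leads from `v` back to `v`, because `y*` is closest to `y` among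
the points with its image. They therefore form a strict order, which extends to an enumeration of
`V`. Along it every partial sum of every `d_i` is nonpositive: otherwise uncrossing tight sets shows
that an exchange within a single block transfers mass backwards. Having a common sign and vanishing
at both ends, the sequences `F_i` of partial sums satisfy `∑ ‖d_i‖² ≤ 2 ∑ ‖F_i‖² ≤ 2 ‖∑ F_i‖²`, and
a discrete Wirtinger inequality bounds `‖∑ F_i‖²` by `(n² / 8) ‖A d‖²`.
-/

open Filter Topology

section DiscreteWirtinger

lemma sum_range_succ_eq_sum_range {M : Type*} [AddCommGroup M] (g : ℕ → M) {n : ℕ}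
    (h : g 0 = g n) : ∑ j ∈ range n, g (j + 1) = ∑ j ∈ range n, g j := by
  rw [← sub_eq_zero, ← sum_sub_distrib, sum_range_sub, h, sub_self]

lemma two_mul_le_div_mul_sq_add_div_mul_sq {p q a b : ℝ} (hp : 0 ≤ p) (hq : 0 ≤ q)
    (ha : p = 0 → a = 0) (hb : q = 0 → b = 0) :
    2 * a * b ≤ q / p * a ^ 2 + p / q * b ^ 2 := by
  rcases hp.eq_or_lt with rfl | hp
  · simp [ha rfl]
  rcases hq.eq_or_lt with rfl | hq
  · simp [hb rfl]
  have hsq : q / p * a ^ 2 + p / q * b ^ 2 - 2 * a * b = (q * a - p * b) ^ 2 / (p * q) := by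
    field_simp
    ring
  linarith [show 0 ≤ (q * a - p * b) ^ 2 / (p * q) by positivity]

-- At `k = 0` the truncated `k - 1` and the division by `h 0` are harmless, since `D 0 = 0`.
lemma discrete_picone {n : ℕ} {h D : ℕ → ℝ} (h0 : D 0 = 0) (hn : D n = 0)
    (h_nonneg : ∀ k ≤ n, 0 ≤ h k) (hD : ∀ k ≤ n, h k = 0 → D k = 0) :
    ∑ k ∈ range n, (2 - h (k + 1) / h k - h (k - 1) / h k) * D k ^ 2 ≤
      ∑ k ∈ range n, (D (k + 1) - D k) ^ 2 :=
  calc ∑ k ∈ range n, (2 - h (k + 1) / h k - h (k - 1) / h k) * D k ^ 2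
      = ∑ k ∈ range n, (1 - h (k + 1) / h k) * D k ^ 2 +
          ∑ k ∈ range n, (1 - h (k - 1) / h k) * D k ^ 2 := by
        rw [← sum_add_distrib]
        exact sum_congr rfl fun k _ => by ring
    _ = ∑ k ∈ range n,
          ((1 - h (k + 1) / h k) * D k ^ 2 + (1 - h k / h (k + 1)) * D (k + 1) ^ 2) := by
        rw [sum_add_distrib, ← sum_range_succ_eq_sum_range
          (fun k => (1 - h (k - 1) / h k) * D k ^ 2) (by simp [h0, hn])]
        rfl
    _ ≤ ∑ k ∈ range n, (D (k + 1) - D k) ^ 2 := by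
        refine sum_le_sum fun k hk => ?_
        have hk := mem_range.1 hk
        linarith [two_mul_le_div_mul_sq_add_div_mul_sq (h_nonneg k hk.le) (h_nonneg (k + 1) hk)
          (hD k hk.le) (hD (k + 1) hk)]

lemma discrete_hardy {n : ℕ} {D : ℕ → ℝ} (h0 : D 0 = 0) (hn : D n = 0) :
    ∑ k ∈ range n, 2 / (k * (n - k) : ℝ) * D k ^ 2 ≤
      ∑ k ∈ range n, (D (k + 1) - D k) ^ 2 := by
  -- The second difference of `k * (n - k)` is constantly `-2`.
  let h : ℕ → ℝ := fun k => k * (n - k)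
  have h_nonneg (k : ℕ) (hk : k ≤ n) : 0 ≤ h k :=
    mul_nonneg k.cast_nonneg (sub_nonneg.2 (Nat.cast_le.2 hk))
  have hD (k : ℕ) (_ : k ≤ n) (hk : h k = 0) : D k = 0 := by
    rcases mul_eq_zero.1 hk with hk | hk
    · rwa [Nat.cast_eq_zero.1 hk]
    · rwa [← Nat.cast_injective (sub_eq_zero.1 hk)]
  refine le_of_eq_of_le (sum_congr rfl fun k hk => ?_) (discrete_picone h0 hn h_nonneg hD)
  rcases k with _ | k
  · simp [h0]
  have hk1 : ((k + 1 : ℕ) : ℝ) ≠ 0 := Nat.cast_ne_zero.2 k.succ_ne_zero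
  have hkn : (n : ℝ) - (k + 1 : ℕ) ≠ 0 :=
    sub_ne_zero.2 (Nat.cast_injective.ne (mem_range.1 hk).ne')
  simp only [h, Nat.add_sub_cancel]
  field_simp
  push_cast
  ring

lemma discrete_wirtinger {n : ℕ} {D : ℕ → ℝ} (h0 : D 0 = 0) (hn : D n = 0) :
    8 / (n : ℝ) ^ 2 * ∑ k ∈ range n, D k ^ 2 ≤ ∑ k ∈ range n, (D (k + 1) - D k) ^ 2 := by
  refine le_trans ?_ (discrete_hardy h0 hn)
  rw [mul_sum]
  refine sum_le_sum fun k hk => ?_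
  rcases k.eq_zero_or_pos with rfl | hk0
  · simp [h0]
  have hk0 : (0 : ℝ) < k := Nat.cast_pos.2 hk0
  have hkn : (0 : ℝ) < n - k := sub_pos.2 (Nat.cast_lt.2 (mem_range.1 hk))
  have hamgm : 8 / (n : ℝ) ^ 2 ≤ 2 / (k * (n - k)) := by
    rw [div_le_div_iff₀ (by nlinarith) (by positivity)]
    nlinarith [sq_nonneg ((n : ℝ) - 2 * k)]
  gcongr

lemma sum_sq_sub_le_two_mul_sum_sq {n : ℕ} {F : ℕ → ℝ} (h0n : F 0 = F n) (hF : ∀ k, F k ≤ 0) :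
    ∑ k ∈ range n, (F (k + 1) - F k) ^ 2 ≤ 2 * ∑ k ∈ range n, F k ^ 2 :=
  calc ∑ k ∈ range n, (F (k + 1) - F k) ^ 2
      ≤ ∑ k ∈ range n, (F (k + 1) ^ 2 + F k ^ 2) :=
        sum_le_sum fun k _ => by nlinarith [mul_nonneg_of_nonpos_of_nonpos (hF (k + 1)) (hF k)]
    _ = 2 * ∑ k ∈ range n, F k ^ 2 := by
        rw [sum_add_distrib, sum_range_succ_eq_sum_range (fun k => F k ^ 2) (by simp only [h0n]),
          two_mul]

lemma sum_sq_le_sq_sum_of_nonpos {ι : Type*} {s : Finset ι} {a : ι → ℝ} (ha : ∀ i ∈ s, a i ≤ 0) :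
    ∑ i ∈ s, a i ^ 2 ≤ (∑ i ∈ s, a i) ^ 2 := by
  simpa using sum_sq_le_sq_sum_of_nonneg (f := fun i => -a i) fun i hi => neg_nonneg.2 (ha i hi)

lemma mul_sum_sum_sq_sub_le_sum_sq_sum_sub {ι : Type*} [Fintype ι] {n : ℕ} {F : ι → ℕ → ℝ}
    (h0 : ∀ i, F i 0 = 0) (hn : ∀ i, F i n = 0) (hF : ∀ i k, F i k ≤ 0) :
    4 / (n : ℝ) ^ 2 * ∑ i, ∑ k ∈ range n, (F i (k + 1) - F i k) ^ 2 ≤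
      ∑ k ∈ range n, (∑ i, F i (k + 1) - ∑ i, F i k) ^ 2 :=
  calc 4 / (n : ℝ) ^ 2 * ∑ i, ∑ k ∈ range n, (F i (k + 1) - F i k) ^ 2
      ≤ 4 / (n : ℝ) ^ 2 * ∑ i, 2 * ∑ k ∈ range n, F i k ^ 2 := by
        gcongr with i
        exact sum_sq_sub_le_two_mul_sum_sq ((h0 i).trans (hn i).symm) (hF i)
    _ = 8 / (n : ℝ) ^ 2 * ∑ k ∈ range n, ∑ i, F i k ^ 2 := by
        rw [← mul_sum, sum_comm]
        ring
    _ ≤ 8 / (n : ℝ) ^ 2 * ∑ k ∈ range n, (∑ i, F i k) ^ 2 := by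
        gcongr with k
        exact sum_sq_le_sq_sum_of_nonpos fun i _ => hF i k
    _ ≤ ∑ k ∈ range n, (∑ i, F i (k + 1) - ∑ i, F i k) ^ 2 :=
        discrete_wirtinger (by simp [h0]) (by simp [hn])

end DiscreteWirtinger

section PartialSum

variable {V : Type*} [Fintype V] {n : ℕ}

/-- The sum of `g` over the first `k` elements of the enumeration `e`. -/
def partialSum (e : V ≃ Fin n) (g : V → ℝ) (k : ℕ) : ℝ :=
  ∑ v with (e v : ℕ) < k, g v

lemma partialSum_zero (e : V ≃ Fin n) (g : V → ℝ) : partialSum e g 0 = 0 := by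
  simp [partialSum]

lemma partialSum_self (e : V ≃ Fin n) (g : V → ℝ) : partialSum e g n = ∑ v, g v := by
  simp [partialSum]

lemma partialSum_succ_sub_partialSum (e : V ≃ Fin n) (g : V → ℝ) (j : Fin n) :
    partialSum e g (j + 1) - partialSum e g j = g (e.symm j) := by
  classical
  have hinsert : univ.filter (fun v => (e v : ℕ) < j + 1) =
      insert (e.symm j) (univ.filter fun v => (e v : ℕ) < j) := by
    ext v
    simp only [mem_filter, mem_univ, true_and, mem_insert, Equiv.eq_symm_apply, Fin.ext_iff]
    omega
  rw [partialSum, partialSum, hinsert, sum_insert (by simp), add_sub_cancel_right]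

lemma partialSum_sum {ι : Type*} (s : Finset ι) (e : V ≃ Fin n) (g : ι → V → ℝ) (k : ℕ) :
    partialSum e (fun v => ∑ i ∈ s, g i v) k = ∑ i ∈ s, partialSum e (g i) k :=
  sum_comm

lemma sum_sq_eq_sum_range_partialSum (e : V ≃ Fin n) (g : V → ℝ) :
    ∑ v, g v ^ 2 = ∑ k ∈ range n, (partialSum e g (k + 1) - partialSum e g k) ^ 2 := by
  simp only [sum_range, partialSum_succ_sub_partialSum]
  exact (e.symm.sum_comp fun v => g v ^ 2).symm

lemma mul_sum_sum_sq_le_sum_sq_sum_of_partialSum_nonpos {ι : Type*} [Fintype ι] (e : V ≃ Fin n)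
    {d : ι → V → ℝ} (hd : ∀ i, ∑ v, d i v = 0) (hpartial : ∀ i k, partialSum e (d i) k ≤ 0) :
    4 / (n : ℝ) ^ 2 * ∑ i, ∑ v, d i v ^ 2 ≤ ∑ v, (∑ i, d i v) ^ 2 := by
  simp only [sum_sq_eq_sum_range_partialSum e, partialSum_sum]
  exact mul_sum_sum_sq_sub_le_sum_sq_sum_sub (fun i => partialSum_zero e (d i))
    (fun i => (partialSum_self e (d i)).trans (hd i)) hpartial

end PartialSum

lemma exists_equiv_fin_of_isStrictOrder {V : Type*} [Fintype V] (R : V → V → Prop)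
    [IsStrictOrder V R] : ∃ e : V ≃ Fin (Fintype.card V), ∀ u v, R u v → e u < e v := by
  let _ : PartialOrder V := partialOrderOfSO R
  let _ : Fintype (LinearExtension V) := ‹Fintype V›
  let φ := (monoEquivOfFin (LinearExtension V) rfl).symm
  refine ⟨φ.toEquiv, fun u v huv => φ.strictMono ?_⟩
  have huv : u < v := huv
  exact (toLinearExtension.monotone huv.le).lt_of_ne huv.ne

section BasePolytope

variable {V : Type*} {g : Finset V → ℝ} {x y δ η : V → ℝ} {S T : Finset V}

/-- `S` is tight at `x`: the constraint of the base polytope of `g` indexed by `S` is an equality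
at `x`. -/
def IsTight (g : Finset V → ℝ) (x : V → ℝ) (S : Finset V) : Prop :=
  ∑ v ∈ S, x v = g S

lemma IsTight.inter_and_union [Fintype V] [DecidableEq V] (hg : Submodular g)
    (hx : InBasePolytope g x) (hS : IsTight g x S) (hT : IsTight g x T) :
    IsTight g x (S ∩ T) ∧ IsTight g x (S ∪ T) := by
  unfold IsTight at *
  have hmodular := sum_union_inter (s₁ := S) (s₂ := T) (f := x)
  constructor <;> linarith [hg S T, hx.1 (S ∪ T), hx.1 (S ∩ T)]

lemma exists_isTight_superset_disjoint [Fintype V] [DecidableEq V] (hg : Submodular g)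
    (hg0 : g ∅ = 0) (hx : InBasePolytope g x) {A B : Finset V}
    (hsep : ∀ v ∈ A, ∀ u ∈ B, ∃ S, IsTight g x S ∧ v ∈ S ∧ u ∉ S) :
    ∃ T, IsTight g x T ∧ A ⊆ T ∧ Disjoint B T := by
  choose! S hS hmem hnotMem using hsep
  refine ⟨A.sup fun v => B.inf (S v), ?_, fun v hv => ?_, ?_⟩
  · refine sup_induction (p := IsTight g x) (by simp [IsTight, hg0])
      (fun _ h₁ _ h₂ => (h₁.inter_and_union hg hx h₂).2) fun v hv => ?_
    exact inf_induction (p := IsTight g x) hx.2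
      (fun _ h₁ _ h₂ => (h₁.inter_and_union hg hx h₂).1) fun u hu => hS v hv u hu
  · exact mem_sup.2 ⟨v, hv, mem_inf.2 fun u hu => hmem v hv u hu⟩
  · refine disjoint_left.2 fun u hu huT => ?_
    obtain ⟨v, hv, huv⟩ := mem_sup.1 huT
    exact hnotMem v hv u hu (mem_inf.1 huv u hu)

lemma sum_sub_nonpos_of_isTight_separated [Fintype V] [DecidableEq V] (hg : Submodular g)
    (hg0 : g ∅ = 0) (hx : InBasePolytope g x) (hy : InBasePolytope g y) {L : Finset V}
    (hsep : ∀ v ∈ L, ∀ u ∉ L, x v < y v → y u < x u → ∃ S, IsTight g x S ∧ v ∈ S ∧ u ∉ S) :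
    ∑ v ∈ L, (y v - x v) ≤ 0 := by
  obtain ⟨T, hT, hpos, hneg⟩ := exists_isTight_superset_disjoint hg hg0 hx
    (A := {v ∈ L | x v < y v}) (B := {u ∈ Lᶜ | y u < x u}) fun v hv u hu => by
      simp only [mem_filter, mem_compl] at hv hu
      exact hsep v hv.1 u hu.1 hv.2 hu.2
  have hLT : ∑ v ∈ L \ T, (y v - x v) ≤ 0 := sum_nonpos fun v hv => by
    obtain ⟨hvL, hvT⟩ := mem_sdiff.1 hv
    exact sub_nonpos.2 <| not_lt.1 fun h => hvT (hpos (mem_filter.2 ⟨hvL, h⟩))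
  have hTL : 0 ≤ ∑ v ∈ T \ L, (y v - x v) := sum_nonneg fun v hv => by
    obtain ⟨hvT, hvL⟩ := mem_sdiff.1 hv
    exact sub_nonneg.2 <| not_lt.1 fun h =>
      disjoint_left.1 hneg (mem_filter.2 ⟨mem_compl.2 hvL, h⟩) hvT
  calc ∑ v ∈ L, (y v - x v) ≤ ∑ v ∈ T, (y v - x v) :=
        sum_sdiff_le_sum_sdiff.1 (hLT.trans hTL)
    _ = ∑ v ∈ T, y v - g T := by rw [sum_sub_distrib, hT]
    _ ≤ 0 := sub_nonpos.2 (hy.1 T)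

/-- `δ` belongs to the cone of feasible directions of the base polytope of `g` at `x`, described by
the constraints that are tight at `x`. -/
def IsFeasibleDirection [Fintype V] (g : Finset V → ℝ) (x δ : V → ℝ) : Prop :=
  ∑ v, δ v = 0 ∧ ∀ S, IsTight g x S → ∑ v ∈ S, δ v ≤ 0

variable [Fintype V]

lemma IsFeasibleDirection.add (hδ : IsFeasibleDirection g x δ) (hη : IsFeasibleDirection g x η) :
    IsFeasibleDirection g x (δ + η) := by
  simp only [IsFeasibleDirection, Pi.add_apply, sum_add_distrib]
  exact ⟨by rw [hδ.1, hη.1, add_zero], fun S hS => add_nonpos (hδ.2 S hS) (hη.2 S hS)⟩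

lemma isFeasibleDirection_single_sub_single [DecidableEq V] {u v : V}
    (h : ∀ S, IsTight g x S → v ∈ S → u ∈ S) :
    IsFeasibleDirection g x (Pi.single v 1 - Pi.single u 1) := by
  refine ⟨by simp, fun S hS => ?_⟩
  by_cases hv : v ∈ S
  · simp [hv, h S hS hv]
  · by_cases hu : u ∈ S <;> simp [hv, hu]

lemma IsFeasibleDirection.eventually_inBasePolytope (hx : InBasePolytope g x)
    (hδ : IsFeasibleDirection g x δ) :
    ∀ᶠ ε : ℝ in 𝓝[>] 0, InBasePolytope g (x + ε • δ) := by
  simp only [InBasePolytope, Pi.add_apply, Pi.smul_apply, smul_eq_mul, sum_add_distrib, ← mul_sum,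
    hδ.1, mul_zero, add_zero, hx.2, and_true, eventually_all]
  intro S
  rcases (hx.1 S).eq_or_lt with hS | hS
  · filter_upwards [self_mem_nhdsWithin] with ε hε
    linarith [mul_nonpos_of_nonneg_of_nonpos (Set.mem_Ioi.1 hε).le (hδ.2 S hS)]
  · have hcont : Continuous fun ε : ℝ => ∑ v ∈ S, x v + ε * ∑ v ∈ S, δ v := by fun_prop
    exact ((hcont.tendsto 0).eventually_le_const (by simpa using hS)).filter_mono
      nhdsWithin_le_nhds

end BasePolytope

section ClosestPoint

lemma norm2_le_norm2_iff {κ : Type*} [Fintype κ] {a b : κ → ℝ} :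
    norm2 a ≤ norm2 b ↔ a ⬝ᵥ a ≤ b ⬝ᵥ b := by
  simp only [norm2, dotProduct, ← pow_two]
  exact Real.sqrt_le_sqrt_iff (sum_nonneg fun _ _ => sq_nonneg _)

lemma dotProduct_nonpos_of_eventually_norm2_le {κ : Type*} [Fintype κ] {y x δ : κ → ℝ}
    (h : ∀ᶠ ε : ℝ in 𝓝[>] 0, norm2 (y - x) ≤ norm2 (y - (x + ε • δ))) :
    (y - x) ⬝ᵥ δ ≤ 0 := by
  have hquad : ∀ᶠ ε : ℝ in 𝓝[>] 0, 2 * (y - x) ⬝ᵥ δ ≤ ε * δ ⬝ᵥ δ := by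
    filter_upwards [h, self_mem_nhdsWithin] with ε hle hε
    rw [norm2_le_norm2_iff, ← sub_sub] at hle
    simp only [sub_dotProduct _ (ε • δ), dotProduct_sub _ _ (ε • δ), smul_dotProduct,
      dotProduct_smul, smul_eq_mul, dotProduct_comm δ (y - x)] at hle
    exact le_of_mul_le_mul_left (by linarith) (Set.mem_Ioi.1 hε)
  have hlim : Tendsto (fun ε : ℝ => ε * δ ⬝ᵥ δ) (𝓝[>] 0) (𝓝 0) :=
    ((continuous_mul_const _).tendsto' 0 0 (zero_mul _)).mono_left nhdsWithin_le_nhds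
  linarith [ge_of_tendsto hlim hquad]

variable {ι V : Type*} [Fintype ι] [Fintype V] [DecidableEq V] {f : ι → Finset V → ℝ}
  {x y : ι × V → ℝ} {u v w : V}

/-- Some direction that is feasible at `x` in every block changes the sum of the blocks by
`e_v - e_u` and makes an acute angle with `y - x`. -/
def ImprovingTransfer (f : ι → Finset V → ℝ) (x y : ι × V → ℝ) (u v : V) : Prop :=
  ∃ δ : ι × V → ℝ, (∀ i, IsFeasibleDirection (f i) (fun w => x (i, w)) fun w => δ (i, w)) ∧
    (∀ w, ∑ i, δ (i, w) = (Pi.single v 1 - Pi.single u 1 : V → ℝ) w) ∧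
    0 < (y - x) ⬝ᵥ δ

lemma ImprovingTransfer.trans (huv : ImprovingTransfer f x y u v)
    (hvw : ImprovingTransfer f x y v w) : ImprovingTransfer f x y u w := by
  obtain ⟨δ, hδ, hδsum, hδpos⟩ := huv
  obtain ⟨η, hη, hηsum, hηpos⟩ := hvw
  refine ⟨δ + η, fun i => (hδ i).add (hη i), fun t => ?_, ?_⟩
  · simp only [Pi.add_apply, Pi.sub_apply, sum_add_distrib, hδsum, hηsum]
    ring
  · rw [dotProduct_add]
    exact add_pos hδpos hηpos

lemma improvingTransfer_of_forall_isTight {i : ι} (hu : y (i, u) < x (i, u))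
    (hv : x (i, v) < y (i, v))
    (huv : ∀ S, IsTight (f i) (fun w => x (i, w)) S → v ∈ S → u ∈ S) :
    ImprovingTransfer f x y u v := by
  classical
  refine ⟨Pi.single (i, v) 1 - Pi.single (i, u) 1, fun j => ?_, fun w => ?_, ?_⟩
  · rcases eq_or_ne j i with rfl | hj
    · convert isFeasibleDirection_single_sub_single huv using 2 with w
      simp [Pi.single_apply]
    · simp [IsFeasibleDirection, hj]
  · simp [Pi.single_apply, Prod.ext_iff, ite_and]
  · simp only [dotProduct_sub, dotProduct_single, Pi.sub_apply, mul_one]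
    linarith

lemma not_improvingTransfer_self (hx : ∀ i, InBasePolytope (f i) fun v => x (i, v))
    (hclosest : ∀ z : ι × V → ℝ, (∀ i, InBasePolytope (f i) fun v => z (i, v)) →
      (∀ v, ∑ i, z (i, v) = ∑ i, x (i, v)) → norm2 (y - x) ≤ norm2 (y - z)) (v : V) :
    ¬ ImprovingTransfer f x y v v := by
  rintro ⟨δ, hδ, hδsum, hδpos⟩
  refine hδpos.not_ge (dotProduct_nonpos_of_eventually_norm2_le ?_)
  filter_upwards [eventually_all.2 fun i => (hδ i).eventually_inBasePolytope (hx i)] with ε hε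
  refine hclosest _ hε fun w => ?_
  simp [sum_add_distrib, ← mul_sum, hδsum]

theorem restricted_strong_convexity_general (hsub : ∀ i, Submodular (f i)) (h0 : ∀ i, f i ∅ = 0)
    (hy : ∀ i, InBasePolytope (f i) fun v => y (i, v))
    (hx : ∀ i, InBasePolytope (f i) fun v => x (i, v))
    (hclosest : ∀ z : ι × V → ℝ, (∀ i, InBasePolytope (f i) fun v => z (i, v)) →
      (∀ v, ∑ i, z (i, v) = ∑ i, x (i, v)) → norm2 (y - x) ≤ norm2 (y - z)) :
    4 / (Fintype.card V : ℝ) ^ 2 * ∑ p, (y p - x p) ^ 2 ≤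
      ∑ v, (∑ i, y (i, v) - ∑ i, x (i, v)) ^ 2 := by
  have : IsStrictOrder V (ImprovingTransfer f x y) :=
    { irrefl := not_improvingTransfer_self hx hclosest
      trans := fun _ _ _ => ImprovingTransfer.trans }
  obtain ⟨e, he⟩ := exists_equiv_fin_of_isStrictOrder (ImprovingTransfer f x y)
  have hpartial (i : ι) (k : ℕ) : partialSum e (fun v => y (i, v) - x (i, v)) k ≤ 0 := by
    refine sum_sub_nonpos_of_isTight_separated (hsub i) (h0 i) (hx i) (hy i)
      fun v hv u hu hvpos huneg => ?_
    by_contra! hnosep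
    have huv : e u < e v := he u v (improvingTransfer_of_forall_isTight huneg hvpos hnosep)
    simp only [mem_filter, mem_univ, true_and] at hv hu
    exact hu (lt_trans huv hv)
  have hblock (i : ι) : ∑ v, (y (i, v) - x (i, v)) = 0 := by
    rw [sum_sub_distrib, (hy i).2, (hx i).2, sub_self]
  simpa only [Fintype.sum_prod_type, sum_sub_distrib] using
    mul_sum_sum_sq_le_sum_sq_sum_of_partialSum_nonpos e hblock hpartial

end ClosestPoint

/-- Theorem 4.1, bound on `ℓ*`: for every `y ∈ 𝒫` and `y*` a closest
point of `E` to `y`, `‖A(y - y*)‖₂² ≥ (4/n²) ‖y - y*‖₂²`; i.e. the (Prox-DSFM)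
objective is restricted `4/n²`-strongly convex. -/
theorem restricted_strong_convexity
    {V : Type*} [Fintype V] [DecidableEq V] (r : ℕ)
    (f : Fin r → Finset V → ℝ)
    (hsub : ∀ i, Submodular (f i)) (h0 : ∀ i, f i ∅ = 0)
    (sstar : V → ℝ)
    (hsB : InBasePolytope (fun S => ∑ i, f i S) sstar)
    (hsMin : ∀ z : V → ℝ, InBasePolytope (fun S => ∑ i, f i S) z →
      ∑ v, sstar v ^ 2 ≤ ∑ v, z v ^ 2)
    (P E : Set (Fin r × V → ℝ))
    (hP : P = {y | ∀ i, InBasePolytope (f i) (fun v => y (i, v))})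
    (hE : E = {y ∈ P | ∀ v, ∑ i, y (i, v) = sstar v})
    (y ystar : Fin r × V → ℝ) (hyP : y ∈ P) (hyE : ystar ∈ E)
    (hclosest : ∀ z ∈ E, norm2 (y - ystar) ≤ norm2 (y - z)) :
    ∑ v, ((∑ i, y (i, v)) - ∑ i, ystar (i, v)) ^ 2 ≥
      (4 / (Fintype.card V : ℝ) ^ 2) * ∑ p, (y p - ystar p) ^ 2 := by
  subst hP hE
  exact restricted_strong_convexity_general hsub h0 hyP hyE.1 fun z hz hzx =>
    hclosest z ⟨hz, fun v => (hzx v).trans (hyE.2 v)⟩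
end

section
/- Let 𝒜 = {a ∈ ℝ^{rn} : Aa = 0}. A pair (a, y) ∈ 𝒜 × 𝒫 minimizes ‖a − y‖₂² over 𝒜 × 𝒫 if and only if Ay = s* and a is the orthogonal projection of y onto 𝒜 (namely a_i = y_i − (Ay)/r for each i). In particular, the y-components of optimal solutions of (Best-Approx) are exactly the points of E = {y ∈ 𝒫 : Ay = s*}. -/
open Finset

/-!
Completing the square gives, for `∑ aᵢ = 0`,
`∑ ‖aᵢ - yᵢ‖² = ∑ ‖aᵢ - (yᵢ - (Ay)/r)‖² + ‖Ay‖² / r`,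
so optimality means that `a` is the projection of `y` and that `Ay` has minimal norm in the
Minkowski sum of the blocks. For base polytopes this Minkowski sum is `B(∑ fᵢ)`: it is compact and
convex, and a point of `B(∑ fᵢ)` outside it would be separated from it by a linear functional, which
is impossible because the greedy algorithm for one ordering of `V` minimizes that functional over
all the base polytopes at once, and the greedy vertex is additive in the set function.
-/

open scoped Pointwise

section MinkowskiSum

theorem eq_of_forall_norm_le_of_norm_le {E : Type*} [NormedAddCommGroup E] [NormedSpace ℝ E]
    [StrictConvexSpace ℝ E] {C : Set E} (hC : Convex ℝ C) {s x : E}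
    (hs : s ∈ C) (hmin : ∀ z ∈ C, ‖s‖ ≤ ‖z‖) (hx : x ∈ C) (hle : ‖x‖ ≤ ‖s‖) : x = s := by
  have hnorm : ‖x‖ = ‖s‖ := le_antisymm hle (hmin x hx)
  by_contra hne
  have hmid : (1 / 2 : ℝ) • (x + s) ∈ C := by
    rw [smul_add]
    exact hC hx hs (by norm_num) (by norm_num) (by norm_num)
  exact ((norm_midpoint_lt_iff hnorm).2 hne).not_ge (hnorm ▸ hmin _ hmid)

section Module

variable {ι E : Type*} [Fintype ι] [AddCommGroup E] [Module ℝ E]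

/-- The orthogonal projection of a family `y` of vectors onto the space of families with sum zero
(the subspace `𝒜` of Best-Approx), obtained by subtracting the mean of `y`. -/
noncomputable def sumZeroProj (y : ι → E) (i : ι) : E :=
  y i - (Fintype.card ι : ℝ)⁻¹ • ∑ j, y j

theorem sum_sumZeroProj [Nonempty ι] (y : ι → E) : ∑ i, sumZeroProj y i = 0 := by
  simp [sumZeroProj, ← Nat.cast_smul_eq_nsmul ℝ, smul_smul]

end Module

variable {ι E : Type*} [Fintype ι] [NormedAddCommGroup E] [InnerProductSpace ℝ E]

theorem sum_norm_sub_sq_eq_add [Nonempty ι] {a : ι → E} (ha : ∑ i, a i = 0) (y : ι → E) :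
    ∑ i, ‖a i - y i‖ ^ 2 =
      ∑ i, ‖a i - sumZeroProj y i‖ ^ 2 + ‖∑ i, y i‖ ^ 2 / Fintype.card ι := by
  set m := (Fintype.card ι : ℝ)⁻¹ • ∑ i, y i with hm
  have hterm (i : ι) : ‖a i - y i‖ ^ 2 =
      ‖a i - sumZeroProj y i‖ ^ 2 - 2 * inner ℝ (a i - sumZeroProj y i) m + ‖m‖ ^ 2 := by
    rw [← norm_sub_sq_real, sumZeroProj, ← hm]
    congr 2
    abel
  have horth : ∑ i, inner ℝ (a i - sumZeroProj y i) m = 0 := by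
    rw [← sum_inner, sum_sub_distrib, ha, sum_sumZeroProj, sub_zero, inner_zero_left]
  have hmean : Fintype.card ι * ‖m‖ ^ 2 = ‖∑ i, y i‖ ^ 2 / Fintype.card ι := by
    rw [hm, norm_smul, mul_pow, Real.norm_eq_abs, sq_abs]
    field_simp
  simp only [hterm, sum_add_distrib, sum_sub_distrib, ← mul_sum, horth, sum_const, card_univ,
    nsmul_eq_mul, hmean]
  ring

theorem sum_norm_sumZeroProj_sub_sq [Nonempty ι] (y : ι → E) :
    ∑ i, ‖sumZeroProj y i - y i‖ ^ 2 = ‖∑ i, y i‖ ^ 2 / Fintype.card ι := by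
  rw [sum_norm_sub_sq_eq_add (sum_sumZeroProj y)]
  simp

theorem forall_sum_norm_sub_sq_le_iff_sum_eq_and_eq_sumZeroProj [Nonempty ι] {C : ι → Set E}
    (hC : ∀ i, Convex ℝ (C i)) {s : E} (hs : s ∈ ∑ i, C i) (hmin : ∀ z ∈ ∑ i, C i, ‖s‖ ≤ ‖z‖)
    {a y : ι → E} (ha : ∑ i, a i = 0) (hy : ∀ i, y i ∈ C i) :
    (∀ a' y' : ι → E, ∑ i, a' i = 0 → (∀ i, y' i ∈ C i) →
        ∑ i, ‖a i - y i‖ ^ 2 ≤ ∑ i, ‖a' i - y' i‖ ^ 2) ↔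
      ∑ i, y i = s ∧ ∀ i, a i = sumZeroProj y i := by
  have hsum {y' : ι → E} (hy' : ∀ i, y' i ∈ C i) : ∑ i, y' i ∈ ∑ i, C i :=
    (Set.mem_fintype_sum _ _).2 ⟨y', hy', rfl⟩
  have hcard : (0 : ℝ) < Fintype.card ι := mod_cast Fintype.card_pos
  constructor
  · intro hopt
    obtain ⟨z, hz, rfl⟩ := (Set.mem_fintype_sum _ _).1 hs
    have hbound := hopt (sumZeroProj z) z (sum_sumZeroProj z) hz
    rw [sum_norm_sub_sq_eq_add ha, sum_norm_sumZeroProj_sub_sq] at hbound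
    have hdefect : 0 ≤ ∑ i, ‖a i - sumZeroProj y i‖ ^ 2 := by positivity
    have hnorm : ‖∑ i, y i‖ = ‖∑ i, z i‖ := by
      refine le_antisymm ?_ (hmin _ (hsum hy))
      rw [← sq_le_sq₀ (norm_nonneg _) (norm_nonneg _), ← div_le_div_iff_of_pos_right hcard]
      linarith
    have hzero : ∑ i, ‖a i - sumZeroProj y i‖ ^ 2 = 0 := by
      rw [hnorm] at hbound
      linarith
    refine ⟨eq_of_forall_norm_le_of_norm_le (convex_sum _ fun i _ ↦ hC i) hs hmin (hsum hy)
      hnorm.le, fun i ↦ ?_⟩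
    have hi := (sum_eq_zero_iff_of_nonneg fun i _ ↦ by positivity).1 hzero i (mem_univ i)
    simpa [sub_eq_zero] using hi
  · rintro ⟨rfl, hproj⟩ a' y' ha' hy'
    calc ∑ i, ‖a i - y i‖ ^ 2
        = ‖∑ i, y i‖ ^ 2 / Fintype.card ι := by simp only [hproj, sum_norm_sumZeroProj_sub_sq]
      _ ≤ ‖∑ i, y' i‖ ^ 2 / Fintype.card ι := by
        gcongr
        exact hmin _ (hsum hy')
      _ ≤ ∑ i, ‖a' i - y' i‖ ^ 2 := by
        rw [sum_norm_sub_sq_eq_add ha']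
        exact le_add_of_nonneg_left (by positivity)

end MinkowskiSum

section Greedy

theorem exists_linearOrder_monotone {V α : Type*} [LinearOrder α] (w : V → α) :
    ∃ _ : LinearOrder V, Monotone w := by
  classical
  let _ : LinearOrder V := linearOrderOfSTO WellOrderingRel
  let key (v : V) : α ×ₗ V := toLex (w v, v)
  have hkey : Function.Injective key := fun u v h ↦ congrArg (fun p ↦ (ofLex p).2) h
  exact ⟨LinearOrder.lift' key hkey, fun u v h ↦ Prod.Lex.monotone_fst (key u) (key v) h⟩

variable {V : Type*} [LinearOrder V]

theorem isLowerSet_of_insert_of_forall_lt {m : V} {S : Finset V}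
    (hlt : ∀ v ∈ S, v < m) (hS : IsLowerSet ((insert m S : Finset V) : Set V)) :
    IsLowerSet (S : Set V) := by
  intro v u huv hv
  refine mem_of_mem_insert_of_ne (hS huv (mem_insert_of_mem hv)) ?_
  exact (huv.trans_lt (hlt v hv)).ne

theorem sum_mul_le_mul_sum_of_isLowerSet {R : Type*} [Semiring R] [PartialOrder R]
    [IsOrderedRing R] {w d : V → R} (hw : Monotone w)
    (hd : ∀ L : Finset V, IsLowerSet (L : Set V) → 0 ≤ ∑ v ∈ L, d v)
    {L : Finset V} (hL : IsLowerSet (L : Set V)) {c : R} (hc : ∀ v ∈ L, w v ≤ c) :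
    ∑ v ∈ L, w v * d v ≤ c * ∑ v ∈ L, d v := by
  induction L using Finset.induction_on_max generalizing c with
  | empty => simp
  | insert m S hlt ih =>
    have hm : m ∉ S := fun hm ↦ (hlt m hm).false
    calc ∑ v ∈ insert m S, w v * d v
        = w m * d m + ∑ v ∈ S, w v * d v := sum_insert hm
      _ ≤ w m * d m + w m * ∑ v ∈ S, d v := by
        gcongr
        exact ih (isLowerSet_of_insert_of_forall_lt hlt hL) fun v hv ↦ hw (hlt v hv).le
      _ = w m * ∑ v ∈ insert m S, d v := by rw [sum_insert hm, mul_add]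
      _ ≤ c * ∑ v ∈ insert m S, d v :=
        mul_le_mul_of_nonneg_right (hc m (mem_insert_self m S)) (hd _ hL)

variable [LocallyFiniteOrderBot V]

/-- The vector that Edmonds' greedy algorithm produces for the set function `g` when it processes
the elements of `V` in increasing order. -/
def greedyVector (g : Finset V → ℝ) (v : V) : ℝ :=
  g (Iic v) - g (Iio v)

theorem greedyVector_sum {ι : Type*} [Fintype ι] (f : ι → Finset V → ℝ) (v : V) :
    greedyVector (fun S ↦ ∑ i, f i S) v = ∑ i, greedyVector (f i) v := by
  simp [greedyVector]

theorem sum_greedyVector_le [DecidableEq V] {g : Finset V → ℝ} (hg : Submodular g)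
    (h0 : g ∅ = 0) (S : Finset V) : ∑ v ∈ S, greedyVector g v ≤ g S := by
  induction S using Finset.induction_on_max with
  | empty => simp [h0]
  | insert m S hlt ih =>
    have hunion : insert m S ∪ Iio m = Iic m := by
      rw [insert_union, union_eq_right.2 fun v hv ↦ mem_Iio.2 (hlt v hv), Iio_insert]
    have hinter : insert m S ∩ Iio m = S := by
      rw [insert_inter_of_notMem (by simp), inter_eq_left.2 fun v hv ↦ mem_Iio.2 (hlt v hv)]
    have hsub := hg (insert m S) (Iio m)
    rw [hunion, hinter] at hsub
    rw [sum_insert fun hm ↦ (hlt m hm).false, greedyVector]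
    linarith

theorem sum_greedyVector_of_isLowerSet {g : Finset V → ℝ} (h0 : g ∅ = 0) {L : Finset V}
    (hL : IsLowerSet (L : Set V)) : ∑ v ∈ L, greedyVector g v = g L := by
  induction L using Finset.induction_on_max with
  | empty => simp [h0]
  | insert m S hlt ih =>
    have hS : S = Iio m := by
      ext v
      refine ⟨fun hv ↦ mem_Iio.2 (hlt v hv), fun hv ↦ ?_⟩
      have hvm := mem_Iio.1 hv
      exact mem_of_mem_insert_of_ne (hL hvm.le (mem_insert_self m S)) hvm.ne
    rw [sum_insert fun hm ↦ (hlt m hm).false, ih (isLowerSet_of_insert_of_forall_lt hlt hL),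
      greedyVector, ← Iio_insert, ← hS, sub_add_cancel]

variable [Fintype V]

theorem inBasePolytope_greedyVector [DecidableEq V] {g : Finset V → ℝ} (hg : Submodular g)
    (h0 : g ∅ = 0) : InBasePolytope g (greedyVector g) :=
  ⟨sum_greedyVector_le hg h0, sum_greedyVector_of_isLowerSet h0 (by simpa using isLowerSet_univ)⟩

theorem sum_mul_greedyVector_le {g : Finset V → ℝ} (h0 : g ∅ = 0) {w : V → ℝ} (hw : Monotone w)
    {z : V → ℝ} (hz : InBasePolytope g z) : ∑ v, w v * greedyVector g v ≤ ∑ v, w v * z v := by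
  obtain ⟨c, hc⟩ := (Set.finite_range w).bddAbove
  have hlower (L : Finset V) (hL : IsLowerSet (L : Set V)) :
      0 ≤ ∑ v ∈ L, (greedyVector g v - z v) := by
    rw [sum_sub_distrib, sum_greedyVector_of_isLowerSet h0 hL, sub_nonneg]
    exact hz.1 L
  have huniv : IsLowerSet ((univ : Finset V) : Set V) := by simpa using isLowerSet_univ
  have htotal : ∑ v, (greedyVector g v - z v) = 0 := by
    rw [sum_sub_distrib, sum_greedyVector_of_isLowerSet h0 huniv, hz.2, sub_self]
  have habel := sum_mul_le_mul_sum_of_isLowerSet hw hlower huniv fun v _ ↦ hc ⟨v, rfl⟩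
  rw [htotal, mul_zero] at habel
  simpa [mul_sub] using habel

end Greedy

section BasePolytope

variable {V : Type*} [Fintype V]

/-- The base polytope `B(g)`, as a subset of Euclidean space. -/
def basePolytope (g : Finset V → ℝ) : Set (EuclideanSpace ℝ V) :=
  {x | InBasePolytope g x.ofLp}

theorem convex_basePolytope (g : Finset V → ℝ) : Convex ℝ (basePolytope g) := by
  intro x hx z hz s t hs ht hst
  have hcomb (S : Finset V) : ∑ v ∈ S, (s • x + t • z).ofLp v =
      s * ∑ v ∈ S, x.ofLp v + t * ∑ v ∈ S, z.ofLp v := by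
    simp [sum_add_distrib, mul_sum]
  refine ⟨fun S ↦ ?_, ?_⟩
  · calc ∑ v ∈ S, (s • x + t • z).ofLp v
        = s * ∑ v ∈ S, x.ofLp v + t * ∑ v ∈ S, z.ofLp v := hcomb S
      _ ≤ s * g S + t * g S := by
        gcongr
        exacts [hx.1 S, hz.1 S]
      _ = g S := by rw [← add_mul, hst, one_mul]
  · rw [hcomb, hx.2, hz.2, ← add_mul, hst, one_mul]

theorem isClosed_basePolytope (g : Finset V → ℝ) : IsClosed (basePolytope g) := by
  simp only [basePolytope, InBasePolytope, Set.ofPred_and, Set.ofPred_forall]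
  refine (isClosed_iInter fun S ↦ ?_).inter ?_
  · exact isClosed_le (by fun_prop) continuous_const
  · exact isClosed_eq (by fun_prop) continuous_const

theorem isCompact_basePolytope (g : Finset V → ℝ) : IsCompact (basePolytope g) := by
  classical
  have hbox : IsCompact (WithLp.toLp 2 ''
      Set.Icc (fun v : V ↦ g univ - g (univ.erase v)) fun v ↦ g {v}) :=
    isCompact_Icc.image (PiLp.continuous_toLp 2 _)
  refine hbox.of_isClosed_subset (isClosed_basePolytope g) fun x hx ↦
    ⟨x.ofLp, ⟨fun v ↦ ?_, fun v ↦ ?_⟩, rfl⟩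
  · have hrest := hx.1 (univ.erase v)
    have htotal := hx.2
    rw [← add_sum_erase univ x.ofLp (mem_univ v)] at htotal
    dsimp only
    linarith
  · simpa using hx.1 {v}

variable {ι : Type*} [Fintype ι]

theorem isCompact_sum_basePolytope (f : ι → Finset V → ℝ) :
    IsCompact (∑ i, basePolytope (f i)) := by
  rw [← Set.image_finsetSum_pi, coe_univ]
  exact (isCompact_univ_pi fun i ↦ isCompact_basePolytope (f i)).image (by fun_prop)

theorem sum_basePolytope_subset (f : ι → Finset V → ℝ) :
    ∑ i, basePolytope (f i) ⊆ basePolytope fun S ↦ ∑ i, f i S := by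
  intro x hx
  obtain ⟨y, hy, rfl⟩ := (Set.mem_fintype_sum _ _).1 hx
  refine ⟨fun S ↦ ?_, ?_⟩ <;> simp only [WithLp.ofLp_sum, Finset.sum_apply] <;> rw [sum_comm]
  · exact sum_le_sum fun i _ ↦ (hy i).1 S
  · exact sum_congr rfl fun i _ ↦ (hy i).2

theorem exists_mem_sum_basePolytope_inner_le [DecidableEq V] {f : ι → Finset V → ℝ}
    (hf : ∀ i, Submodular (f i)) (h0 : ∀ i, f i ∅ = 0) (w : EuclideanSpace ℝ V) :
    ∃ q ∈ ∑ i, basePolytope (f i), ∀ z ∈ basePolytope fun S ↦ ∑ i, f i S,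
      inner ℝ w q ≤ inner ℝ w z := by
  obtain ⟨_, hw⟩ := exists_linearOrder_monotone w.ofLp
  let _ : LocallyFiniteOrderBot V := .ofIic V (fun v ↦ {u | u ≤ v}) (by simp)
  refine ⟨∑ i, WithLp.toLp 2 (greedyVector (f i)), (Set.mem_fintype_sum _ _).2
    ⟨_, fun i ↦ inBasePolytope_greedyVector (hf i) (h0 i), rfl⟩, fun z hz ↦ ?_⟩
  have hgreedy := sum_mul_greedyVector_le (by simp [h0]) hw hz
  simpa [PiLp.inner_apply, greedyVector_sum, mul_comm] using hgreedy

theorem basePolytope_sum [DecidableEq V] {f : ι → Finset V → ℝ}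
    (hf : ∀ i, Submodular (f i)) (h0 : ∀ i, f i ∅ = 0) :
    basePolytope (fun S ↦ ∑ i, f i S) = ∑ i, basePolytope (f i) := by
  refine Set.Subset.antisymm (fun x hx ↦ ?_) (sum_basePolytope_subset f)
  by_contra hnot
  obtain ⟨φ, c, hxc, hc⟩ := geometric_hahn_banach_point_closed
    (convex_sum _ fun i _ ↦ convex_basePolytope (f i)) (isCompact_sum_basePolytope f).isClosed hnot
  obtain ⟨q, hq, hqle⟩ :=
    exists_mem_sum_basePolytope_inner_le hf h0 ((InnerProductSpace.toDual ℝ _).symm φ)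
  have hφ := hqle x hx
  simp only [InnerProductSpace.toDual_symm_apply] at hφ
  exact (hxc.trans (hc q hq)).not_ge hφ

end BasePolytope

section Blocks

variable {ι V : Type*}

/-- The identification of `ℝ^{rn}`, indexed by pairs, with families of `r` vectors of `ℝⁿ`. -/
def blocks : (ι × V → ℝ) ≃ (ι → EuclideanSpace ℝ V) :=
  (Equiv.curry ι V ℝ).trans (Equiv.piCongrRight fun _ ↦ (WithLp.equiv 2 (V → ℝ)).symm)

@[simp]
theorem blocks_apply (x : ι × V → ℝ) (i : ι) (v : V) : (blocks x i).ofLp v = x (i, v) :=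
  rfl

variable [Fintype ι]

theorem sum_blocks_eq_iff (x : ι × V → ℝ) (s : EuclideanSpace ℝ V) :
    ∑ i, blocks x i = s ↔ ∀ v, ∑ i, x (i, v) = s.ofLp v := by
  simp [PiLp.ext_iff]

theorem sum_norm_blocks_sub_sq [Fintype V] (a y : ι × V → ℝ) :
    ∑ i, ‖blocks a i - blocks y i‖ ^ 2 = ∑ p, (a p - y p) ^ 2 := by
  simp [EuclideanSpace.real_norm_sq_eq, Fintype.sum_prod_type]

theorem blocks_eq_sumZeroProj_iff (a y : ι × V → ℝ) :
    (∀ i, blocks a i = sumZeroProj (blocks y) i) ↔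
      ∀ p, a p = y p - (∑ i, y (i, p.2)) / Fintype.card ι := by
  simp [PiLp.ext_iff, sumZeroProj, div_eq_inv_mul]

end Blocks

theorem best_approx_optimal_iff_general {ι V : Type*} [Fintype ι] [Nonempty ι] [Fintype V]
    [DecidableEq V] {f : ι → Finset V → ℝ}
    (hsub : ∀ i, Submodular (f i)) (h0 : ∀ i, f i ∅ = 0) {s : V → ℝ}
    (hsB : InBasePolytope (fun S ↦ ∑ i, f i S) s)
    (hsMin : ∀ z : V → ℝ, InBasePolytope (fun S ↦ ∑ i, f i S) z → ∑ v, s v ^ 2 ≤ ∑ v, z v ^ 2)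
    {a y : ι × V → ℝ} (ha : ∀ v, ∑ i, a (i, v) = 0)
    (hy : ∀ i, InBasePolytope (f i) fun v ↦ y (i, v)) :
    (∀ a' y' : ι × V → ℝ, (∀ v, ∑ i, a' (i, v) = 0) →
        (∀ i, InBasePolytope (f i) fun v ↦ y' (i, v)) →
        ∑ p, (a p - y p) ^ 2 ≤ ∑ p, (a' p - y' p) ^ 2) ↔
      (∀ v, ∑ i, y (i, v) = s v) ∧
        ∀ p, a p = y p - (∑ i, y (i, p.2)) / Fintype.card ι := by
  have hpoly := basePolytope_sum hsub h0
  have hs : WithLp.toLp 2 s ∈ ∑ i, basePolytope (f i) := hpoly.le hsB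
  have hmin (z) (hz : z ∈ ∑ i, basePolytope (f i)) : ‖WithLp.toLp 2 s‖ ≤ ‖z‖ := by
    rw [← sq_le_sq₀ (norm_nonneg _) (norm_nonneg _)]
    simpa only [EuclideanSpace.real_norm_sq_eq] using hsMin z.ofLp (hpoly.ge hz)
  have hiff := forall_sum_norm_sub_sq_le_iff_sum_eq_and_eq_sumZeroProj
    (fun i ↦ convex_basePolytope (f i)) hs hmin ((sum_blocks_eq_iff a 0).2 ha)
    (y := blocks y) hy
  simp only [← blocks.forall_congr_right, sum_blocks_eq_iff, sum_norm_blocks_sub_sq,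
    blocks_eq_sumZeroProj_iff] at hiff
  exact hiff

/-- Lemma 3.1 for Best-Approx: `(a, y) ∈ 𝒜 × 𝒫` minimizes `‖a - y‖₂²`
iff `Ay = s*` and `a` is the orthogonal projection of `y` onto `𝒜`, namely
`aᵢ = yᵢ - (Ay)/r` for each `i`. -/
theorem best_approx_optimal_iff
    {V : Type*} [Fintype V] [DecidableEq V] (r : ℕ) (hr : 0 < r)
    (f : Fin r → Finset V → ℝ)
    (hsub : ∀ i, Submodular (f i)) (h0 : ∀ i, f i ∅ = 0)
    (sstar : V → ℝ)
    (hsB : InBasePolytope (fun S => ∑ i, f i S) sstar)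
    (hsMin : ∀ z : V → ℝ, InBasePolytope (fun S => ∑ i, f i S) z →
      ∑ v, sstar v ^ 2 ≤ ∑ v, z v ^ 2)
    (a y : Fin r × V → ℝ)
    (ha : ∀ v, ∑ i, a (i, v) = 0)
    (hy : ∀ i, InBasePolytope (f i) (fun v => y (i, v))) :
    (∀ a' y' : Fin r × V → ℝ, (∀ v, ∑ i, a' (i, v) = 0) →
        (∀ i, InBasePolytope (f i) (fun v => y' (i, v))) →
        ∑ p, (a p - y p) ^ 2 ≤ ∑ p, (a' p - y' p) ^ 2)
      ↔ ((∀ v, ∑ i, y (i, v) = sstar v) ∧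
          ∀ p : Fin r × V, a p = y p - (∑ i, y (i, p.2)) / (r : ℝ)) := by
  have : Nonempty (Fin r) := Fin.pos_iff_nonempty.1 hr
  simpa only [Fintype.card_fin] using best_approx_optimal_iff_general hsub h0 hsB hsMin ha hy
end
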